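/- Let k ≥ 4 be a real number and let H be a finite bipartite graph such that the degree of every vertex of H lies in the interval [k+1, k⁴ − 2k² − 1]. Then T̃_H(2,0) · T̃_H(0,2) ≥ T̃_H(1,1)² = 1. -/

import Mathlib

open scoped Classical

/-- The permutation Tutte polynomial of a bipartite graph `G` on finite vertex set `V`
with bipartition class `A` (the other class being `Aᶜ`). -/
noncomputable def permTutte {V : Type*} [Fintype V] [DecidableEq V]
    (G : SimpleGraph V) (A : Set V) (x y : ℝ) : ℝ :=
  ((Fintype.card V).factorial : ℝ)⁻¹ *
    ∑ π : V ≃ Fin (Fintype.card V),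
      x ^ Nat.card {i : V // i ∈ A ∧ ∀ j, G.Adj i j → π j < π i} *
      y ^ Nat.card {j : V // j ∉ A ∧ ∀ i, G.Adj j i → π i < π j}

/-- `G` is bipartite with parts `A` and `Aᶜ`. -/
def IsBipartition {V : Type*} (G : SimpleGraph V) (A : Set V) : Prop :=
  ∀ u v, G.Adj u v → (u ∈ A ↔ v ∉ A)

/-!
Give the vertices independent uniform labels, from `[0, 1]` on `A` and from `[0, 1 - u]` off `A`.
This is a uniform labeling from `[0, 1]` conditioned on an event of probability `(1 - u) ^ |Aᶜ|`,
so that `T̃(x, y)` is at least `(1 - u) ^ |Aᶜ|` times the mean of the product of the activity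
weights of the vertices. For `1 ≤ x` and `0 ≤ y ≤ 1`, once the order of the labels off `A` is
reversed each weight is a nonnegative monotone function of the labels. By Harris' inequality the
mean of the product is then at least the product of the means, and these depend only on `u` and
the degrees.

The same bound with the two classes exchanged, multiplied with the first, gives for
`T̃(2, 0) T̃(0, 2)` a lower bound to which each vertex contributes `(1 + p) (1 - u) (1 - q)`, where
`p` and `q` are the probabilities that a vertex of its degree is internally, respectively
externally, active. The degree bounds make this factor at least `1` for `u = 1 / k ^ 2`.

To stay within finite sums, labels are taken in `{0, …, M - 1}`, and `M` tends to infinity.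
-/

open Finset Filter Topology
open scoped BigOperators

section Expectation

variable {K : Type*} [Field K] [LinearOrder K] [IsStrictOrderedRing K]

theorem expect_mul_expect_le_expect_mul_of_monotone {α : Type*} [DistribLattice α] [Fintype α]
    {f g : α → K} (hf₀ : 0 ≤ f) (hg₀ : 0 ≤ g) (hf : Monotone f) (hg : Monotone g) :
    (𝔼 a, f a) * 𝔼 a, g a ≤ 𝔼 a, f a * g a := by
  have hfkg := fkg f g (fun _ ↦ (1 : K)) zero_le_one hf₀ hg₀ hf hg fun _ _ ↦ le_rfl
  simp only [one_mul, sum_const, card_univ, nsmul_eq_mul, mul_one] at hfkg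
  simp only [Fintype.expect_eq_sum_div_card, div_mul_div_comm]
  rcases isEmpty_or_nonempty α with _ | _
  · simp
  · rw [div_le_div_iff₀ (by positivity) (by positivity)]
    calc _ ≤ (Fintype.card α * ∑ a, f a * g a) * (Fintype.card α : K) := by gcongr
      _ = _ := by ring

theorem prod_expect_le_expect_prod_of_monotone {α ι : Type*} [DistribLattice α] [Fintype α]
    [Nonempty α] (s : Finset ι) {φ : ι → α → K} (hφ₀ : ∀ i, 0 ≤ φ i) (hφ : ∀ i, Monotone (φ i)) :
    ∏ i ∈ s, 𝔼 a, φ i a ≤ 𝔼 a, ∏ i ∈ s, φ i a := by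
  induction s using Finset.induction_on with
  | empty => simp
  | insert i s hi ih =>
    simp only [prod_insert hi]
    calc (𝔼 a, φ i a) * ∏ j ∈ s, 𝔼 a, φ j a
      _ ≤ (𝔼 a, φ i a) * 𝔼 a, ∏ j ∈ s, φ j a := by
        gcongr
        exact expect_nonneg fun a _ ↦ hφ₀ i a
      _ ≤ 𝔼 a, φ i a * ∏ j ∈ s, φ j a :=
        expect_mul_expect_le_expect_mul_of_monotone (hφ₀ i)
          (fun a ↦ prod_nonneg fun j _ ↦ hφ₀ j a) (hφ i)
          fun a b hab ↦ prod_le_prod (fun j _ ↦ hφ₀ j a) fun j _ ↦ hφ j hab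

variable {V : Type*} [Fintype V] [DecidableEq V] {κ : V → Type*} [∀ v, Fintype (κ v)]

theorem expect_pi_prod_univ {R : Type*} [Semifield R] [CharZero R] (h : ∀ v, κ v → R) :
    𝔼 f : ∀ v, κ v, ∏ v, h v (f v) = ∏ v, 𝔼 y, h v y := by
  simp only [Fintype.expect_eq_sum_div_card, prod_div_distrib, Fintype.card_pi, Nat.cast_prod,
    prod_univ_sum, Fintype.piFinset_univ]

theorem expect_expect_update {E : Type*} [AddCommMonoid E] [Module ℚ≥0 E] (v : V)
    [Nonempty (κ v)] (F : (∀ w, κ w) → E) :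
    𝔼 x, 𝔼 f, F (Function.update f v x) = 𝔼 f, F f := by
  let swap : κ v × (∀ w, κ w) → κ v × (∀ w, κ w) := fun p ↦ (p.2 v, Function.update p.2 v p.1)
  have hswap : Function.Involutive swap := fun p ↦ by simp [swap]
  calc 𝔼 x, 𝔼 f, F (Function.update f v x)
    _ = 𝔼 p : κ v × (∀ w, κ w), F (swap p).2 := (expect_product' _ _ _).symm
    _ = 𝔼 p : κ v × (∀ w, κ w), F p.2 := Fintype.expect_equiv hswap.toPerm _ _ fun _ ↦ rfl
    _ = 𝔼 _x : κ v, 𝔼 f, F f := expect_product' _ _ fun _ ↦ F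
    _ = 𝔼 f, F f := Fintype.expect_const _

theorem expect_pi_prod_of_notMem {R : Type*} [Semifield R] [CharZero R] [∀ v, Nonempty (κ v)]
    {v : V} {s : Finset V} (hv : v ∉ s) (g : ∀ w, κ v → κ w → R) :
    𝔼 f : ∀ w, κ w, ∏ w ∈ s, g w (f v) (f w) = 𝔼 x, ∏ w ∈ s, 𝔼 y, g w x y := by
  rw [← expect_expect_update v]
  refine expect_congr rfl fun x _ ↦ ?_
  calc 𝔼 f : ∀ w, κ w, ∏ w ∈ s, g w (Function.update f v x v) (Function.update f v x w)
    _ = 𝔼 f : ∀ w, κ w, ∏ w, if w ∈ s then g w x (f w) else 1 := by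
      refine expect_congr rfl fun f _ ↦ ?_
      rw [Fintype.prod_ite_mem]
      refine prod_congr rfl fun w (hw : w ∈ s) ↦ ?_
      rw [Function.update_self, Function.update_of_ne (ne_of_mem_of_not_mem hw hv)]
    _ = ∏ w, 𝔼 y, if w ∈ s then g w x y else 1 :=
      expect_pi_prod_univ fun w y ↦ if w ∈ s then g w x y else 1
    _ = ∏ w ∈ s, 𝔼 y, g w x y := by
      rw [← Fintype.prod_ite_mem s]
      refine prod_congr rfl fun w _ ↦ ?_
      split_ifs <;> simp

end Expectation

section Labelings

variable {V : Type*} [Fintype V] [DecidableEq V]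

theorem expect_perm_comp_lt {E α : Type*} [AddCommMonoid E] [Module ℚ≥0 E] [LinearOrder α]
    (F : (V → V → Prop) → E) {f : V → α} (hf : Function.Injective f) :
    𝔼 σ : Equiv.Perm V, F (fun i j ↦ f (σ i) < f (σ j)) =
      𝔼 π : V ≃ Fin (Fintype.card V), F (fun i j ↦ π i < π j) := by
  let _ := LinearOrder.lift' f hf
  let e : V ≃o Fin (Fintype.card V) := (Fintype.orderIsoFinOfCardEq V rfl).symm
  have he (i j : V) : f i < f j ↔ e i < e j := e.lt_iff_lt.symm
  simp only [he]
  exact Fintype.expect_equiv (Equiv.equivCongr (Equiv.refl V) e.toEquiv) _ _ fun _ ↦ rfl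

theorem sum_injective_lt {E α : Type*} [AddCommMonoid E] [Module ℚ≥0 E] [LinearOrder α] [Fintype α]
    (F : (V → V → Prop) → E) :
    ∑ f : V → α with Function.Injective f, F (fun i j ↦ f i < f j) =
      #{f : V → α | Function.Injective f} •
        𝔼 π : V ≃ Fin (Fintype.card V), F (fun i j ↦ π i < π j) := by
  have hcomp (σ : Equiv.Perm V) :
      ∑ f : V → α with Function.Injective f, F (fun i j ↦ f (σ i) < f (σ j)) =
        ∑ f : V → α with Function.Injective f, F (fun i j ↦ f i < f j) :=
    sum_equiv (σ.symm.arrowCongr (Equiv.refl α)) (fun f ↦ by simp [Equiv.arrowCongr]) fun _ _ ↦ rfl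
  calc ∑ f : V → α with Function.Injective f, F (fun i j ↦ f i < f j)
    _ = 𝔼 σ : Equiv.Perm V,
          ∑ f : V → α with Function.Injective f, F (fun i j ↦ f (σ i) < f (σ j)) := by
      simp only [hcomp, Fintype.expect_const]
    _ = ∑ f : V → α with Function.Injective f,
          𝔼 σ : Equiv.Perm V, F (fun i j ↦ f (σ i) < f (σ j)) := expect_sum_comm _ _ _
    _ = _ := sum_eq_card_nsmul fun f hf ↦ expect_perm_comp_lt F (mem_filter_univ f |>.1 hf)

theorem card_filter_injective (α : Type*) [Fintype α] [DecidableEq α] :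
    #{f : V → α | Function.Injective f} =
      (Fintype.card α).descFactorial (Fintype.card V) := by
  rw [← Fintype.card_subtype, Fintype.card_congr (Equiv.subtypeInjectiveEquivEmbedding V α),
    Fintype.card_embedding_eq]

theorem tendsto_descFactorial_div_pow (m : ℕ) :
    Tendsto (fun M : ℕ ↦ (M.descFactorial m : ℝ) / (M : ℝ) ^ m) atTop (𝓝 1) := by
  refine (Asymptotics.isEquivalent_iff_tendsto_one ?_).1 (isEquivalent_descFactorial m)
  filter_upwards [eventually_gt_atTop 0] with M hM
  positivity

theorem abs_expect_lt_sub_le {α : Type*} [LinearOrder α] [Fintype α] [Nonempty α]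
    (F : (V → V → Prop) → ℝ) {C : ℝ}
    (hC : ∀ r, |F r - 𝔼 π : V ≃ Fin (Fintype.card V), F (fun i j ↦ π i < π j)| ≤ C) :
    |𝔼 f : V → α, F (fun i j ↦ f i < f j) -
        𝔼 π : V ≃ Fin (Fintype.card V), F (fun i j ↦ π i < π j)| ≤
      C * (1 - (Fintype.card α).descFactorial (Fintype.card V) /
        (Fintype.card α : ℝ) ^ Fintype.card V) := by
  set T := 𝔼 π : V ≃ Fin (Fintype.card V), F (fun i j ↦ π i < π j)
  set D := (Fintype.card α).descFactorial (Fintype.card V)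
  set N := (Fintype.card α : ℝ) ^ Fintype.card V with hN
  have hN₀ : 0 < N := by positivity
  have hinj : ∑ f : V → α with Function.Injective f, (F (fun i j ↦ f i < f j) - T) = 0 := by
    rw [sum_sub_distrib, sum_injective_lt, sum_const, sub_self]
  have hcard : (#{f : V → α | ¬ Function.Injective f} : ℝ) = N - D := by
    have h := card_filter_add_card_filter_not (s := (univ : Finset (V → α))) Function.Injective
    rw [card_filter_injective, card_univ, Fintype.card_fun] at h
    rw [eq_sub_iff_add_eq', hN]
    exact_mod_cast h
  calc |𝔼 f : V → α, F (fun i j ↦ f i < f j) - T|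
    _ = |∑ f : V → α, (F (fun i j ↦ f i < f j) - T)| / N := by
      rw [← Fintype.expect_const (ι := V → α) T, ← expect_sub_distrib,
        Fintype.expect_eq_sum_div_card, Fintype.card_fun, Nat.cast_pow, abs_div, abs_of_pos hN₀,
        Fintype.expect_const]
    _ = |∑ f : V → α with ¬ Function.Injective f, (F (fun i j ↦ f i < f j) - T)| / N := by
      rw [← sum_filter_add_sum_filter_not univ Function.Injective, hinj, zero_add]
    _ ≤ (∑ f : V → α with ¬ Function.Injective f, C) / N := by
      gcongr
      exact (abs_sum_le_sum_abs _ _).trans (sum_le_sum fun f _ ↦ hC _)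
    _ = C * (1 - D / N) := by
      rw [sum_const, nsmul_eq_mul, hcard]
      field_simp

theorem tendsto_expect_lt (F : (V → V → Prop) → ℝ) :
    Tendsto (fun M : ℕ ↦ 𝔼 f : V → Fin M, F (fun i j ↦ f i < f j)) atTop
      (𝓝 (𝔼 π : V ≃ Fin (Fintype.card V), F (fun i j ↦ π i < π j))) := by
  set T := 𝔼 π : V ≃ Fin (Fintype.card V), F (fun i j ↦ π i < π j)
  obtain ⟨C, hC⟩ : ∃ C, ∀ r, |F r - T| ≤ C :=
    ⟨_, fun r ↦ single_le_sum (f := fun r ↦ |F r - T|) (fun _ _ ↦ abs_nonneg _) (mem_univ r)⟩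
  have hlim : Tendsto (fun M : ℕ ↦ C * (1 - (M.descFactorial (Fintype.card V) : ℝ) /
      (M : ℝ) ^ Fintype.card V)) atTop (𝓝 0) := by
    simpa using ((tendsto_descFactorial_div_pow (Fintype.card V)).const_sub 1).const_mul C
  refine tendsto_iff_norm_sub_tendsto_zero.2
    (squeeze_zero' (.of_forall fun _ ↦ norm_nonneg _) ?_ hlim)
  filter_upwards [eventually_gt_atTop 0] with M hM
  have : Nonempty (Fin M) := ⟨⟨0, hM⟩⟩
  simpa using abs_expect_lt_sub_le (α := Fin M) F hC

theorem prod_div_mul_expect_lt_le {F : (V → V → Prop) → ℝ} (hF : 0 ≤ F) {n : V → ℕ} {M : ℕ}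
    (hn : ∀ v, n v ≤ M) :
    (∏ v, (n v / M : ℝ)) * 𝔼 f : ∀ v, Fin (n v), F (fun i j ↦ (f i : ℕ) < f j) ≤
      𝔼 f : V → Fin M, F (fun i j ↦ f i < f j) := by
  let incl : (∀ v, Fin (n v)) ↪ (V → Fin M) :=
    ⟨fun f v ↦ (f v).castLE (hn v), fun f g hfg ↦
      funext fun v ↦ Fin.castLE_injective (hn v) (congrFun hfg v)⟩
  calc (∏ v, (n v / M : ℝ)) * 𝔼 f : ∀ v, Fin (n v), F (fun i j ↦ (f i : ℕ) < f j)
    _ ≤ (∑ f : ∀ v, Fin (n v), F (fun i j ↦ (f i : ℕ) < f j)) / M ^ Fintype.card V := by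
      simp only [Fintype.expect_eq_sum_div_card, prod_div_distrib, prod_const, card_univ,
        Fintype.card_pi, Fintype.card_fin, Nat.cast_prod]
      rw [div_mul_div_comm, mul_comm (M ^ Fintype.card V : ℝ), mul_div_mul_comm, mul_comm]
      refine mul_le_of_le_one_right (div_nonneg ?_ (by positivity)) (div_self_le_one _)
      exact sum_nonneg fun _ _ ↦ hF _
    _ = (∑ f ∈ univ.map incl, F (fun i j ↦ f i < f j)) / M ^ Fintype.card V := by
      rw [sum_map]; rfl
    _ ≤ (∑ f : V → Fin M, F (fun i j ↦ f i < f j)) / M ^ Fintype.card V := by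
      gcongr
      · exact fun _ _ _ ↦ hF _
      · exact subset_univ _
    _ = 𝔼 f : V → Fin M, F (fun i j ↦ f i < f j) := by
      simp [Fintype.expect_eq_sum_div_card]

end Labelings

section ActivityWeight

variable {V : Type*} (G : SimpleGraph V) (A : Set V) (x y : ℝ)

/-- The factor contributed by the vertex `v` to the permutation Tutte polynomial, `r i j` being
read as "`i` comes before `j`". It takes a relation rather than a permutation so that it also
applies to labelings of the vertices with ties. -/
noncomputable def activityWeight (r : V → V → Prop) (v : V) : ℝ :=
  if ∀ j, G.Adj v j → r j v then (if v ∈ A then x else y) else 1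

/-- The permutation of the labelings in `∏ v, {0, …, n v - 1}` that reverses the labels off `A`.
On a graph with bipartition class `A` it turns both kinds of activity into monotone events. -/
noncomputable def reverseOff (n : V → ℕ) : Equiv.Perm (∀ v, Fin (n v)) :=
  Equiv.piCongrRight fun v ↦ if v ∈ A then Equiv.refl _ else Fin.revPerm

variable {G A x y} {n : V → ℕ}

theorem IsBipartition.notMem_of_adj (hG : IsBipartition G A) {v j : V} (hv : v ∈ A)
    (hj : G.Adj v j) : j ∉ A :=
  (hG v j hj).1 hv

theorem IsBipartition.mem_of_adj (hG : IsBipartition G A) {v j : V} (hv : v ∉ A)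
    (hj : G.Adj v j) : j ∈ A :=
  by_contra fun h ↦ hv ((hG v j hj).2 h)

theorem IsBipartition.compl (hG : IsBipartition G A) : IsBipartition G Aᶜ :=
  fun u v huv ↦ not_congr (hG u v huv)

theorem activityWeight_nonneg (hx : 0 ≤ x) (hy : 0 ≤ y) (r : V → V → Prop) (v : V) :
    0 ≤ activityWeight G A x y r v := by
  unfold activityWeight
  split_ifs <;> first | assumption | exact zero_le_one

theorem activityWeight_le_of_mem (hx : 1 ≤ x) {r r' : V → V → Prop} {v : V} (hv : v ∈ A)
    (h : ∀ j, G.Adj v j → r j v → r' j v) :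
    activityWeight G A x y r v ≤ activityWeight G A x y r' v := by
  simp only [activityWeight, if_pos hv]
  split_ifs with hr hr'
  · exact le_rfl
  · exact absurd (fun j hj ↦ h j hj (hr j hj)) hr'
  · exact hx
  · exact le_rfl

theorem activityWeight_le_of_notMem (hy : y ≤ 1) {r r' : V → V → Prop} {v : V} (hv : v ∉ A)
    (h : ∀ j, G.Adj v j → r' j v → r j v) :
    activityWeight G A x y r v ≤ activityWeight G A x y r' v := by
  simp only [activityWeight, if_neg hv]
  split_ifs with hr hr' hr'
  · exact le_rfl
  · exact hy
  · exact absurd (fun j hj ↦ h j hj (hr' j hj)) hr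
  · exact le_rfl

theorem reverseOff_apply_of_mem (g : ∀ v, Fin (n v)) {v : V} (hv : v ∈ A) :
    reverseOff A n g v = g v := by
  simp [reverseOff, hv]

theorem reverseOff_apply_of_notMem (g : ∀ v, Fin (n v)) {v : V} (hv : v ∉ A) :
    reverseOff A n g v = (g v).rev := by
  simp [reverseOff, hv]

theorem monotone_activityWeight_reverseOff (hG : IsBipartition G A) (hx : 1 ≤ x) (hy : y ≤ 1)
    (v : V) : Monotone fun g : ∀ v, Fin (n v) ↦
      activityWeight G A x y (fun i j ↦ (reverseOff A n g i : ℕ) < reverseOff A n g j) v := by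
  intro g g' hgg'
  by_cases hv : v ∈ A
  · refine activityWeight_le_of_mem hx hv fun j hj h ↦ ?_
    have hj := hG.notMem_of_adj hv hj
    simp only [reverseOff_apply_of_mem _ hv, reverseOff_apply_of_notMem _ hj] at h ⊢
    have hrev : ((g' j).rev : ℕ) ≤ (g j).rev := Fin.rev_le_rev.2 (hgg' j)
    exact hrev.trans_lt (h.trans_le (hgg' v))
  · refine activityWeight_le_of_notMem hy hv fun j hj h ↦ ?_
    have hj := hG.mem_of_adj hv hj
    simp only [reverseOff_apply_of_notMem _ hv, reverseOff_apply_of_mem _ hj] at h ⊢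
    have hrev : ((g' v).rev : ℕ) ≤ (g v).rev := Fin.rev_le_rev.2 (hgg' v)
    exact lt_of_le_of_lt (hgg' j) (h.trans_le hrev)

variable [Fintype V]

theorem pow_natCard_subtype {M : Type*} [CommMonoid M] (p : V → Prop) (x : M) :
    x ^ Nat.card {v // p v} = ∏ v, if p v then x else 1 := by
  rw [Nat.card_eq_fintype_card, Fintype.card_subtype, ← prod_filter, prod_const]

variable [DecidableEq V]

theorem permTutte_eq_expect (G : SimpleGraph V) (A : Set V) (x y : ℝ) :
    permTutte G A x y = 𝔼 π : V ≃ Fin (Fintype.card V),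
      ∏ v, activityWeight G A x y (fun i j ↦ π i < π j) v := by
  rw [Fintype.expect_eq_sum_div_card, Fintype.card_equiv (Fintype.equivFin V), permTutte,
    inv_mul_eq_div]
  congr 1
  refine sum_congr rfl fun π _ ↦ ?_
  rw [pow_natCard_subtype, pow_natCard_subtype, ← prod_mul_distrib]
  refine prod_congr rfl fun v _ ↦ ?_
  by_cases hv : v ∈ A <;> simp [activityWeight, hv]

theorem permTutte_compl (G : SimpleGraph V) (A : Set V) (x y : ℝ) :
    permTutte G Aᶜ x y = permTutte G A y x := by
  simp only [permTutte, Set.mem_compl_iff, not_not, mul_comm]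

theorem permTutte_one_one (G : SimpleGraph V) (A : Set V) : permTutte G A 1 1 = 1 := by
  have : Nonempty (V ≃ Fin (Fintype.card V)) := ⟨Fintype.equivFin V⟩
  simp [permTutte_eq_expect, activityWeight]

theorem prod_expect_activityWeight_le [∀ v, NeZero (n v)] (hG : IsBipartition G A)
    (hx : 1 ≤ x) (hy₀ : 0 ≤ y) (hy₁ : y ≤ 1) :
    ∏ v, 𝔼 f : ∀ v, Fin (n v), activityWeight G A x y (fun i j ↦ (f i : ℕ) < f j) v ≤
      𝔼 f : ∀ v, Fin (n v), ∏ v, activityWeight G A x y (fun i j ↦ (f i : ℕ) < f j) v := by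
  have hreverse (F : (∀ v, Fin (n v)) → ℝ) : 𝔼 g, F (reverseOff A n g) = 𝔼 f, F f :=
    Fintype.expect_equiv (reverseOff A n) _ _ fun _ ↦ rfl
  have h := prod_expect_le_expect_prod_of_monotone univ
    (fun v _ ↦ activityWeight_nonneg (zero_le_one.trans hx) hy₀ _ v)
    (monotone_activityWeight_reverseOff (n := n) hG hx hy₁)
  rw [hreverse fun f ↦ ∏ v, activityWeight G A x y (fun i j ↦ (f i : ℕ) < f j) v] at h
  refine le_of_eq_of_le (prod_congr rfl fun v _ ↦ ?_) h
  exact (hreverse fun f ↦ activityWeight G A x y (fun i j ↦ (f i : ℕ) < f j) v).symm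

theorem expect_ite_val_lt (n m : ℕ) :
    𝔼 i : Fin n, (if (i : ℕ) < m then (1 : ℝ) else 0) = (min m n : ℕ) / n := by
  rw [Fintype.expect_eq_sum_div_card, sum_boole, Fin.card_filter_val_lt, Fintype.card_fin,
    min_comm]

theorem expect_activityWeight [DecidableRel G.Adj] [∀ v, NeZero (n v)] (v : V) :
    𝔼 f : ∀ v, Fin (n v), activityWeight G A x y (fun i j ↦ (f i : ℕ) < f j) v =
      1 + ((if v ∈ A then x else y) - 1) *
        𝔼 i : Fin (n v), ∏ j ∈ G.neighborFinset v, ((min i (n j) : ℕ) / n j : ℝ) := by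
  have hweight (f : ∀ v, Fin (n v)) :
      activityWeight G A x y (fun i j ↦ (f i : ℕ) < f j) v = 1 + ((if v ∈ A then x else y) - 1) *
        ∏ j ∈ G.neighborFinset v, if (f j : ℕ) < f v then 1 else 0 := by
    simp only [activityWeight, prod_boole, SimpleGraph.mem_neighborFinset]
    split_ifs <;> ring
  have hcond := expect_pi_prod_of_notMem (κ := fun v ↦ Fin (n v)) (G.notMem_neighborFinset_self v)
    fun j i l ↦ if (l : ℕ) < i then (1 : ℝ) else 0
  simp only [hweight, expect_add_distrib, ← mul_expect, Fintype.expect_const, hcond,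
    expect_ite_val_lt]

theorem expect_activityWeight_of_forall_adj [DecidableRel G.Adj] [∀ v, NeZero (n v)] {v : V}
    {b : ℕ} (hb : ∀ j, G.Adj v j → n j = b) :
    𝔼 f : ∀ v, Fin (n v), activityWeight G A x y (fun i j ↦ (f i : ℕ) < f j) v =
      1 + ((if v ∈ A then x else y) - 1) *
        𝔼 i : Fin (n v), ((min i b : ℕ) / b : ℝ) ^ G.degree v := by
  rw [expect_activityWeight]
  congr! 3 with i
  rw [← G.card_neighborFinset_eq_degree]
  refine prod_eq_pow_card fun j hj ↦ ?_
  rw [hb j ((G.mem_neighborFinset v j).1 hj)]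

end ActivityWeight

section PowerMeans

theorem tendsto_expect_div_pow (d : ℕ) :
    Tendsto (fun n : ℕ ↦ 𝔼 i : Fin n, (i / n : ℝ) ^ d) atTop (𝓝 (1 / (d + 1))) := by
  have hmono (n : ℕ) : MonotoneOn (fun x : ℝ ↦ x ^ d) (Set.Icc 0 (0 + n)) :=
    fun a ha b _ hab ↦ pow_le_pow_left₀ ha.1 hab d
  have hintegral (n : ℕ) : ∫ x in (0 : ℝ)..(0 + n), x ^ d = n ^ (d + 1) / (d + 1) := by simp
  have hupper (n : ℕ) : ∑ i ∈ range n, (i : ℝ) ^ d ≤ n ^ (d + 1) / (d + 1) := by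
    simpa [hintegral] using (hmono n).sum_le_integral
  have hlower (n : ℕ) : (n : ℝ) ^ (d + 1) / (d + 1) ≤ ∑ i ∈ range n, (i : ℝ) ^ d + n ^ d := by
    calc (n : ℝ) ^ (d + 1) / (d + 1) ≤ ∑ i ∈ range n, ((i + 1 : ℕ) : ℝ) ^ d := by
          simpa [hintegral] using (hmono n).integral_le_sum
      _ ≤ ∑ i ∈ range (n + 1), (i : ℝ) ^ d := by
          rw [sum_range_succ']
          exact le_add_of_nonneg_right (by positivity)
      _ = _ := sum_range_succ _ n
  have hexpect (n : ℕ) :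
      𝔼 i : Fin n, (i / n : ℝ) ^ d = (∑ i ∈ range n, (i : ℝ) ^ d) / n ^ (d + 1) := by
    rw [Fintype.expect_eq_sum_div_card, Fintype.card_fin,
      Fin.sum_univ_eq_sum_range (fun i ↦ (i / n : ℝ) ^ d)]
    simp only [div_pow, ← sum_div, div_div, pow_succ]
  have hlim : Tendsto (fun n : ℕ ↦ 1 / ((d : ℝ) + 1) - 1 / n) atTop (𝓝 (1 / (d + 1))) := by
    simpa using tendsto_one_div_atTop_nhds_zero_nat.const_sub (1 / ((d : ℝ) + 1))
  refine tendsto_of_tendsto_of_tendsto_of_le_of_le' hlim tendsto_const_nhds ?_ ?_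
  all_goals
    filter_upwards [eventually_gt_atTop 0] with n hn
    rw [hexpect]
  · rw [le_div_iff₀ (by positivity)]
    calc (1 / ((d : ℝ) + 1) - 1 / n) * n ^ (d + 1) = n ^ (d + 1) / (d + 1) - n ^ d := by
          field_simp
          ring
      _ ≤ _ := sub_le_iff_le_add.2 (hlower n)
  · rw [div_le_iff₀ (by positivity), one_div_mul_eq_div]
    exact hupper n

theorem expect_min_div_pow_of_le {a b : ℕ} (hb : 0 < b) (hba : b ≤ a) (d : ℕ) :
    𝔼 i : Fin a, ((min i b : ℕ) / b : ℝ) ^ d =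
      1 - b / a + b / a * 𝔼 i : Fin b, (i / b : ℝ) ^ d := by
  have ha : 0 < a := hb.trans_le hba
  have hsmall : ∑ i ∈ range b, ((min i b : ℕ) / b : ℝ) ^ d = ∑ i ∈ range b, (i / b : ℝ) ^ d :=
    sum_congr rfl fun i hi ↦ by rw [min_eq_left (mem_range.1 hi).le]
  have hlarge : ∑ i ∈ Ico b a, ((min i b : ℕ) / b : ℝ) ^ d = a - b := by
    have hone : ∀ i ∈ Ico b a, ((min i b : ℕ) / b : ℝ) ^ d = 1 := fun i hi ↦ by
      rw [min_eq_right (mem_Ico.1 hi).1, div_self (by positivity), one_pow]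
    rw [sum_eq_card_nsmul hone, Nat.card_Ico, nsmul_one, Nat.cast_sub hba]
  rw [Fintype.expect_eq_sum_div_card, Fintype.expect_eq_sum_div_card,
    Fin.sum_univ_eq_sum_range (fun i ↦ ((min i b : ℕ) / b : ℝ) ^ d),
    Fin.sum_univ_eq_sum_range (fun i ↦ (i / b : ℝ) ^ d),
    ← sum_range_add_sum_Ico _ hba, hsmall, hlarge, Fintype.card_fin, Fintype.card_fin]
  field_simp
  ring

theorem expect_min_div_pow_of_ge {a b : ℕ} (ha : 0 < a) (hab : a ≤ b) (d : ℕ) :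
    𝔼 i : Fin a, ((min i b : ℕ) / b : ℝ) ^ d = (a / b : ℝ) ^ d * 𝔼 i : Fin a, (i / a : ℝ) ^ d := by
  rw [mul_expect]
  refine expect_congr rfl fun i _ ↦ ?_
  rw [min_eq_left (i.2.le.trans hab), ← mul_pow, div_mul_div_comm, mul_comm,
    mul_div_mul_right _ _ (by positivity)]

end PowerMeans

section ActivityProbability

/-- The probability that a uniform label of `[0, 1]` exceeds `d` independent uniform labels of
`[0, 1 - u]`: that of internal activity at a vertex of degree `d`, when the two classes of the
graph receive labels from `[0, 1]` and `[0, 1 - u]` respectively. -/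
noncomputable def internalActivityProb (u : ℝ) (d : ℕ) : ℝ := u + (1 - u) / (d + 1)

/-- The probability that a uniform label of `[0, 1 - u]` exceeds `d` independent uniform labels of
`[0, 1]`: that of external activity at a vertex of degree `d`, when the two classes of the graph
receive labels from `[0, 1]` and `[0, 1 - u]` respectively. -/
noncomputable def externalActivityProb (u : ℝ) (d : ℕ) : ℝ := (1 - u) ^ d / (d + 1)

theorem internalActivityProb_nonneg {u : ℝ} (hu₀ : 0 ≤ u) (hu₁ : u ≤ 1) (d : ℕ) :
    0 ≤ internalActivityProb u d :=
  add_nonneg hu₀ (div_nonneg (sub_nonneg.2 hu₁) (by positivity))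

theorem externalActivityProb_le_one {u : ℝ} (hu₀ : 0 ≤ u) (hu₁ : u ≤ 1) (d : ℕ) :
    externalActivityProb u d ≤ 1 :=
  div_le_one_of_le₀ ((pow_le_one₀ (sub_nonneg.2 hu₁) (by linarith)).trans (by simp))
    (by positivity)

variable {u : ℝ} {b : ℕ → ℕ}

theorem tendsto_atTop_of_tendsto_div {c : ℝ} (hc : 0 < c)
    (hlim : Tendsto (fun M ↦ (b M / M : ℝ)) atTop (𝓝 c)) : Tendsto b atTop atTop := by
  refine tendsto_natCast_atTop_iff.1 <|
    (hlim.pos_mul_atTop hc tendsto_natCast_atTop_atTop).congr' ?_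
  filter_upwards [eventually_gt_atTop 0] with M hM
  exact div_mul_cancel₀ _ (by positivity)

theorem tendsto_internalActivityProb (hu : u < 1) (hb : ∀ M, b M ≤ M)
    (hlim : Tendsto (fun M ↦ (b M / M : ℝ)) atTop (𝓝 (1 - u))) (d : ℕ) :
    Tendsto (fun M ↦ 𝔼 i : Fin M, ((min i (b M) : ℕ) / b M : ℝ) ^ d) atTop
      (𝓝 (internalActivityProb u d)) := by
  have hb_atTop := tendsto_atTop_of_tendsto_div (sub_pos.2 hu) hlim
  have h := (hlim.const_sub 1).add (hlim.mul ((tendsto_expect_div_pow d).comp hb_atTop))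
  rw [sub_sub_cancel, mul_one_div] at h
  refine h.congr' ?_
  filter_upwards [hb_atTop.eventually_gt_atTop 0] with M hM
  exact (expect_min_div_pow_of_le hM (hb M) d).symm

theorem tendsto_externalActivityProb (hu : u < 1) (hb : ∀ M, b M ≤ M)
    (hlim : Tendsto (fun M ↦ (b M / M : ℝ)) atTop (𝓝 (1 - u))) (d : ℕ) :
    Tendsto (fun M ↦ 𝔼 i : Fin (b M), ((min i M : ℕ) / M : ℝ) ^ d) atTop
      (𝓝 (externalActivityProb u d)) := by
  have hb_atTop := tendsto_atTop_of_tendsto_div (sub_pos.2 hu) hlim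
  have h := (hlim.pow d).mul ((tendsto_expect_div_pow d).comp hb_atTop)
  rw [mul_one_div] at h
  refine h.congr' ?_
  filter_upwards [hb_atTop.eventually_gt_atTop 0] with M hM
  exact (expect_min_div_pow_of_ge hM (hb M) d).symm

end ActivityProbability

section LowerBound

variable {V : Type*} [Fintype V] [DecidableEq V] {G : SimpleGraph V} [DecidableRel G.Adj]
  {A : Set V} {x y u : ℝ}

theorem prod_le_expect_prod_activityWeight (hG : IsBipartition G A) (hx : 1 ≤ x) (hy₀ : 0 ≤ y)
    (hy₁ : y ≤ 1) {a b : ℕ} (hb : 0 < b) (hba : b ≤ a) :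
    ∏ v, (if v ∈ A then 1 + (x - 1) * 𝔼 i : Fin a, ((min i b : ℕ) / b : ℝ) ^ G.degree v
        else b / a * (1 + (y - 1) * 𝔼 i : Fin b, ((min i a : ℕ) / a : ℝ) ^ G.degree v)) ≤
      𝔼 f : V → Fin a, ∏ v, activityWeight G A x y (fun i j ↦ f i < f j) v := by
  have ha : 0 < a := hb.trans_le hba
  let n (v : V) : ℕ := if v ∈ A then a else b
  have hn (v : V) : n v ≤ a := by grind
  have (v : V) : NeZero (n v) := ⟨by grind⟩
  calc _ = (∏ v, (n v / a : ℝ)) * ∏ v, 𝔼 f : ∀ v, Fin (n v),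
          activityWeight G A x y (fun i j ↦ (f i : ℕ) < f j) v := by
        rw [← prod_mul_distrib]
        refine prod_congr rfl fun v _ ↦ ?_
        by_cases hv : v ∈ A
        · have hn_adj (j : V) (hj : G.Adj v j) : n j = b := if_neg (hG.notMem_of_adj hv hj)
          have hnv : n v = a := if_pos hv
          rw [expect_activityWeight_of_forall_adj hn_adj, hnv, if_pos hv, if_pos hv,
            div_self (by positivity), one_mul]
        · have hn_adj (j : V) (hj : G.Adj v j) : n j = a := if_pos (hG.mem_of_adj hv hj)
          have hnv : n v = b := if_neg hv
          rw [expect_activityWeight_of_forall_adj hn_adj, hnv, if_neg hv, if_neg hv]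
    _ ≤ (∏ v, (n v / a : ℝ)) * 𝔼 f : ∀ v, Fin (n v),
          ∏ v, activityWeight G A x y (fun i j ↦ (f i : ℕ) < f j) v := by
        gcongr
        exact prod_expect_activityWeight_le hG hx hy₀ hy₁
    _ ≤ _ := prod_div_mul_expect_lt_le (F := fun r ↦ ∏ v, activityWeight G A x y r v)
        (fun r ↦ prod_nonneg fun v _ ↦ activityWeight_nonneg (zero_le_one.trans hx) hy₀ r v) hn

theorem prod_le_permTutte (hG : IsBipartition G A) (hu₀ : 0 ≤ u) (hu₁ : u < 1) (hx : 1 ≤ x)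
    (hy₀ : 0 ≤ y) (hy₁ : y ≤ 1) :
    ∏ v, (if v ∈ A then 1 + (x - 1) * internalActivityProb u (G.degree v)
        else (1 - u) * (1 + (y - 1) * externalActivityProb u (G.degree v))) ≤
      permTutte G A x y := by
  let b (M : ℕ) : ℕ := ⌊(1 - u) * M⌋₊
  have hb (M : ℕ) : b M ≤ M :=
    Nat.floor_le_of_le (mul_le_of_le_one_left M.cast_nonneg (by linarith))
  have hlim : Tendsto (fun M ↦ (b M / M : ℝ)) atTop (𝓝 (1 - u)) :=
    (tendsto_nat_floor_mul_div_atTop (sub_nonneg.2 hu₁.le)).comp tendsto_natCast_atTop_atTop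
  have hprod : Tendsto (fun M : ℕ ↦ ∏ v, (if v ∈ A then
        1 + (x - 1) * 𝔼 i : Fin M, ((min i (b M) : ℕ) / b M : ℝ) ^ G.degree v
        else b M / M * (1 + (y - 1) * 𝔼 i : Fin (b M), ((min i M : ℕ) / M : ℝ) ^ G.degree v)))
      atTop (𝓝 (∏ v, (if v ∈ A then 1 + (x - 1) * internalActivityProb u (G.degree v)
        else (1 - u) * (1 + (y - 1) * externalActivityProb u (G.degree v))))) := by
    refine tendsto_finsetProd _ fun v _ ↦ ?_
    split_ifs
    · exact ((tendsto_internalActivityProb hu₁ hb hlim _).const_mul _).const_add _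
    · exact hlim.mul (((tendsto_externalActivityProb hu₁ hb hlim _).const_mul _).const_add _)
  rw [permTutte_eq_expect]
  refine le_of_tendsto_of_tendsto hprod
    (tendsto_expect_lt fun r ↦ ∏ v, activityWeight G A x y r v) ?_
  have hb_atTop := tendsto_atTop_of_tendsto_div (sub_pos.2 hu₁) hlim
  filter_upwards [hb_atTop.eventually_gt_atTop 0] with M hM
  exact prod_le_expect_prod_activityWeight hG hx hy₀ hy₁ hM (hb M)

theorem prod_le_permTutte_mul_permTutte (hG : IsBipartition G A) (hu₀ : 0 ≤ u) (hu₁ : u < 1)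
    (hx : 1 ≤ x) (hy₀ : 0 ≤ y) (hy₁ : y ≤ 1) :
    ∏ v, (1 + (x - 1) * internalActivityProb u (G.degree v)) *
        ((1 - u) * (1 + (y - 1) * externalActivityProb u (G.degree v))) ≤
      permTutte G A x y * permTutte G A y x := by
  have hint (v : V) : 0 ≤ 1 + (x - 1) * internalActivityProb u (G.degree v) := by
    have := mul_nonneg (sub_nonneg.2 hx) (internalActivityProb_nonneg hu₀ hu₁.le (G.degree v))
    linarith
  have hext (v : V) : 0 ≤ (1 - u) * (1 + (y - 1) * externalActivityProb u (G.degree v)) := by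
    refine mul_nonneg (by linarith) ?_
    nlinarith [externalActivityProb_le_one hu₀ hu₁.le (G.degree v)]
  have hprod (S : Set V) : 0 ≤ ∏ v, (if v ∈ S
      then 1 + (x - 1) * internalActivityProb u (G.degree v)
      else (1 - u) * (1 + (y - 1) * externalActivityProb u (G.degree v))) :=
    prod_nonneg fun v _ ↦ by
      split_ifs
      exacts [hint v, hext v]
  have hA := prod_le_permTutte hG hu₀ hu₁ hx hy₀ hy₁
  have hAc := prod_le_permTutte hG.compl hu₀ hu₁ hx hy₀ hy₁
  rw [permTutte_compl] at hAc
  refine le_of_eq_of_le ?_ (mul_le_mul hA hAc (hprod Aᶜ) ((hprod A).trans hA))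
  rw [← prod_mul_distrib]
  refine prod_congr rfl fun v _ ↦ ?_
  by_cases hv : v ∈ A <;> simp [hv, mul_comm]

end LowerBound

section DegreeInequality

theorem one_sub_pow_mul_exp_le_one {u : ℝ} (hu : u ≤ 1) (d : ℕ) :
    (1 - u) ^ d * Real.exp (d * u) ≤ 1 := by
  calc (1 - u) ^ d * Real.exp (d * u)
    _ ≤ Real.exp (-u) ^ d * Real.exp (d * u) := by
      gcongr
      exact Real.one_sub_le_exp_neg u
    _ = 1 := by
      rw [← Real.exp_nat_mul, ← Real.exp_add]
      simp

theorem add_mul_le_add_mul_exp_of_le_one {u s : ℝ} (hu₀ : 0 ≤ u) (hu : u ≤ 1 / 16)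
    (hus : √u + u ≤ s) (hs : s ≤ 1) :
    (s + u) * (1 - u ^ 2) + u * (1 - u) ^ 2 ≤ (s + u) * (Real.exp s * (1 - 2 * u - s * u)) := by
  obtain ⟨t, ht⟩ : ∃ t, t = √u := ⟨_, rfl⟩
  have ht₀ : 0 ≤ t := ht ▸ Real.sqrt_nonneg u
  have htu : t ^ 2 = u := ht ▸ Real.sq_sqrt hu₀
  have ht₁ : t ≤ 1 / 4 := le_of_sq_le_sq (by linarith) (by norm_num)
  rw [← ht] at hus
  have hs₀ : 0 ≤ s := by linarith
  have h6u : 6 * u ≤ s + u := by nlinarith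
  have hleft : u * (1 - u) ^ 2 ≤ (s + u) * (s - 8 / 3 * u + u ^ 2 / 6) := by
    have husq : u ≤ (s - u) ^ 2 := htu ▸ pow_le_pow_left₀ ht₀ (by linarith) 2
    calc u * (1 - u) ^ 2 = u - 4 * u ^ 2 + 6 * u * (u / 3 + u ^ 2 / 6) := by ring
      _ ≤ (s - u) ^ 2 - 4 * u ^ 2 + (s + u) * (u / 3 + u ^ 2 / 6) := by gcongr
      _ = (s + u) * (s - 8 / 3 * u + u ^ 2 / 6) := by ring
  have hright : 1 + s - 8 / 3 * u ≤ (1 + s + s ^ 2 / 2) * (1 - 2 * u - s * u) := by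
    have hsu : s * u ≤ s * t / 4 := by nlinarith [mul_nonneg hs₀ ht₀]
    have hssu : s ^ 2 * u ≤ s ^ 2 / 16 := by nlinarith
    have hsssu : s ^ 3 * u ≤ s ^ 2 * u := by gcongr ?_ * u; nlinarith
    have : 3 * (s * u) + 2 * (s ^ 2 * u) + s ^ 3 * u / 2 ≤ s ^ 2 / 2 + 2 / 3 * u := by
      nlinarith [sq_nonneg (t - s / 2)]
    linarith
  calc (s + u) * (1 - u ^ 2) + u * (1 - u) ^ 2
    _ ≤ (s + u) * (1 + s - 8 / 3 * u) := by nlinarith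
    _ ≤ (s + u) * ((1 + s + s ^ 2 / 2) * (1 - 2 * u - s * u)) := by gcongr
    _ ≤ (s + u) * (Real.exp s * (1 - 2 * u - s * u)) := by
      gcongr
      · nlinarith
      · exact Real.quadratic_le_exp_of_nonneg hs₀

theorem le_exp_half_mul {u s : ℝ} (hu₀ : 0 < u) (hs : 6 ≤ s) (hus : 1 / 2 ≤ (2 + s) * u) :
    9 / 8 ≤ Real.exp (s / 2) * u := by
  have he : (2.7 : ℝ) ^ 3 ≤ Real.exp 1 ^ 3 := by
    gcongr
    exact Real.exp_one_gt_d9.le.trans' (by norm_num)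
  have hexp : 9 / 4 * (2 + s) ≤ Real.exp (s / 2) := by
    calc 9 / 4 * (2 + s) ≤ 2.7 ^ 3 * (s / 2 - 3 + 1) := by linarith
      _ ≤ Real.exp 1 ^ 3 * Real.exp (s / 2 - 3) := by
        gcongr
        · linarith
        · exact Real.add_one_le_exp _
      _ = Real.exp (s / 2) := by
        rw [← Real.exp_nat_mul, ← Real.exp_add]
        ring_nf
  calc 9 / 8 ≤ 9 / 4 * ((2 + s) * u) := by linarith
    _ = 9 / 4 * (2 + s) * u := by ring
    _ ≤ Real.exp (s / 2) * u := by gcongr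

theorem le_exp_mul_of_one_le {u s : ℝ} (hu₀ : 0 < u) (hu : u ≤ 1 / 16) (hs : 1 ≤ s)
    (hsu : u ^ 2 ≤ 1 - 2 * u - s * u) : 17 / 16 ≤ Real.exp s * (1 - 2 * u - s * u) := by
  set z := 1 - 2 * u - s * u
  rcases le_total (1 / 2) z with hz' | hz'
  · have hexp : 1 + s + s ^ 2 / 2 ≤ Real.exp s := Real.quadratic_le_exp_of_nonneg (by linarith)
    calc (17 / 16 : ℝ) ≤ 5 / 2 * (1 / 2) := by norm_num
      _ ≤ Real.exp s * z := by
        gcongr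
        nlinarith
  · have hexp : 9 / 8 ≤ Real.exp (s / 2) * u :=
      le_exp_half_mul hu₀ (by nlinarith) (by linarith)
    calc (17 / 16 : ℝ) ≤ (9 / 8) ^ 2 := by norm_num
      _ ≤ (Real.exp (s / 2) * u) ^ 2 := by gcongr
      _ = Real.exp s * u ^ 2 := by rw [mul_pow, ← Real.exp_nat_mul]; ring_nf
      _ ≤ Real.exp s * z := by gcongr

theorem add_mul_le_add_mul_exp {u s : ℝ} (hu₀ : 0 < u) (hu : u ≤ 1 / 16) (hus : √u + u ≤ s)
    (hsu : u ^ 2 ≤ 1 - 2 * u - s * u) :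
    (s + u) * (1 - u ^ 2) + u * (1 - u) ^ 2 ≤ (s + u) * (Real.exp s * (1 - 2 * u - s * u)) := by
  rcases le_total s 1 with hs | hs
  · exact add_mul_le_add_mul_exp_of_le_one hu₀.le hu hus hs
  calc (s + u) * (1 - u ^ 2) + u * (1 - u) ^ 2
    _ ≤ (s + u) * (17 / 16) := by nlinarith
    _ ≤ _ := by
      gcongr
      exact le_exp_mul_of_one_le hu₀ hu hs hsu

theorem one_le_activityProb_mul {u : ℝ} {d : ℕ} (hu₀ : 0 < u) (hu : u ≤ 1 / 16)
    (hd : √u + u ≤ d * u) (hdu : u ^ 2 ≤ 1 - 2 * u - d * u * u) :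
    1 ≤ (1 + internalActivityProb u d) * ((1 - u) * (1 - externalActivityProb u d)) := by
  have hu₁ : u ≤ 1 := by linarith
  have hkey : (1 - u) ^ d * ((d + 1) * (1 - u ^ 2) + (1 - u) ^ 2) ≤
      (d + 1) * (1 - 2 * u - d * u * u) := by
    refine le_of_mul_le_mul_left ?_ hu₀
    have hz : 0 ≤ 1 - 2 * u - d * u * u := (sq_nonneg u).trans hdu
    calc u * ((1 - u) ^ d * ((d + 1) * (1 - u ^ 2) + (1 - u) ^ 2))
      _ = (1 - u) ^ d * ((d * u + u) * (1 - u ^ 2) + u * (1 - u) ^ 2) := by ring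
      _ ≤ (1 - u) ^ d * ((d * u + u) * (Real.exp (d * u) * (1 - 2 * u - d * u * u))) :=
        mul_le_mul_of_nonneg_left (add_mul_le_add_mul_exp hu₀ hu hd hdu)
          (pow_nonneg (sub_nonneg.2 hu₁) d)
      _ = ((1 - u) ^ d * Real.exp (d * u)) * ((d * u + u) * (1 - 2 * u - d * u * u)) := by ring
      _ ≤ (d * u + u) * (1 - 2 * u - d * u * u) :=
        mul_le_of_le_one_left (mul_nonneg (by positivity) hz) (one_sub_pow_mul_exp_le_one hu₁ d)
      _ = u * ((d + 1) * (1 - 2 * u - d * u * u)) := by ring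
  have hdiff : (1 + internalActivityProb u d) * ((1 - u) * (1 - externalActivityProb u d)) - 1 =
      ((d + 1) * (1 - 2 * u - d * u * u) -
        (1 - u) ^ d * ((d + 1) * (1 - u ^ 2) + (1 - u) ^ 2)) / (d + 1) ^ 2 := by
    unfold internalActivityProb externalActivityProb
    field_simp
    ring
  rw [← sub_nonneg, hdiff]
  exact div_nonneg (sub_nonneg.2 hkey) (by positivity)

theorem one_le_activityProb_mul_of_degree_le {k : ℝ} (hk : 4 ≤ k) {d : ℕ} (hd₁ : k + 1 ≤ d)
    (hd₂ : (d : ℝ) ≤ k ^ 4 - 2 * k ^ 2 - 1) :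
    1 ≤ (1 + internalActivityProb (1 / k ^ 2) d) *
      ((1 - 1 / k ^ 2) * (1 - externalActivityProb (1 / k ^ 2) d)) := by
  have hk₀ : 0 < k := by linarith
  refine one_le_activityProb_mul (by positivity) ?_ ?_ ?_
  · calc 1 / k ^ 2 ≤ 1 / 4 ^ 2 := by gcongr
      _ = 1 / 16 := by norm_num
  · calc √(1 / k ^ 2) + 1 / k ^ 2 = 1 / k + 1 / k ^ 2 := by
          rw [← one_div_pow, Real.sqrt_sq (one_div_nonneg.2 hk₀.le)]
      _ = (k + 1) * (1 / k ^ 2) := by field_simp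
      _ ≤ d * (1 / k ^ 2) := by gcongr
  · calc (1 / k ^ 2) ^ 2
      _ = 1 - 2 * (1 / k ^ 2) - (k ^ 4 - 2 * k ^ 2 - 1) * (1 / k ^ 2) * (1 / k ^ 2) := by
        field_simp
        ring
      _ ≤ 1 - 2 * (1 / k ^ 2) - d * (1 / k ^ 2) * (1 / k ^ 2) := by gcongr

end DegreeInequality

/-- If `k ≥ 4` is real and every vertex degree of the finite bipartite graph `H` lies in
`[k+1, k⁴ − 2k² − 1]`, then `T̃_H(2,0) · T̃_H(0,2) ≥ T̃_H(1,1)² = 1`. -/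
theorem permTutte_merino_welsh_of_degrees
    {V : Type*} [Fintype V] [DecidableEq V] (G : SimpleGraph V) [DecidableRel G.Adj]
    (A : Set V) (hbip : IsBipartition G A)
    (k : ℝ) (hk : 4 ≤ k)
    (hdeg : ∀ v : V, k + 1 ≤ (G.degree v : ℝ) ∧ (G.degree v : ℝ) ≤ k ^ 4 - 2 * k ^ 2 - 1) :
    permTutte G A 2 0 * permTutte G A 0 2 ≥ permTutte G A 1 1 ^ 2 ∧
      permTutte G A 1 1 ^ 2 = 1 := by
  have hone : permTutte G A 1 1 ^ 2 = 1 := by rw [permTutte_one_one, one_pow]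
  have hu : 1 / k ^ 2 < 1 := by
    rw [div_lt_one (by positivity)]
    exact one_lt_pow₀ (by linarith) two_ne_zero
  refine ⟨?_, hone⟩
  calc permTutte G A 1 1 ^ 2 = 1 := hone
    _ ≤ ∏ v, (1 + internalActivityProb (1 / k ^ 2) (G.degree v)) *
          ((1 - 1 / k ^ 2) * (1 - externalActivityProb (1 / k ^ 2) (G.degree v))) :=
      Finset.one_le_prod fun v _ ↦ one_le_activityProb_mul_of_degree_le hk (hdeg v).1 (hdeg v).2
    _ = ∏ v, (1 + (2 - 1) * internalActivityProb (1 / k ^ 2) (G.degree v)) *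
          ((1 - 1 / k ^ 2) * (1 + (0 - 1) * externalActivityProb (1 / k ^ 2) (G.degree v))) := by
      norm_num [sub_eq_add_neg]
    _ ≤ permTutte G A 2 0 * permTutte G A 0 2 :=
      prod_le_permTutte_mul_permTutte hbip (by positivity) hu one_le_two le_rfl zero_le_one
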